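/- arXiv:1604.04809 — 3 statements merged into one kernel-verified Lean document; each statement's English description precedes it below -/
import Mathlib

section
/- Let s be a Nash equilibrium of a coordination game on a weighted directed graph with bonuses, and suppose a non-empty coalition K has a profitable deviation s' from s. Then there exists a directed simple cycle in the graph all of whose nodes belong to K and all of whose nodes choose one and the same colour in s'. (In particular, every node of K has a predecessor in K that deviates to the same colour as it does.) -/
open scoped Classical

namespace CG

/-- Payoff of node `i` in a coordination game on a weighted directed graph
with adjacency `adj` (an edge `j → i` is `adj j i`), edge weights `w`,
bonuses `β`, under the joint strategy `s`. -/
noncomputable def payoff {V M : Type} [Fintype V] (adj : V → V → Prop)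
    (w : V → V → ℝ) (β : V → M → ℕ) (s : V → M) (i : V) : ℝ :=
  (∑ j ∈ Finset.univ.filter (fun j => adj j i ∧ s j = s i), w j i) + (β i (s i) : ℝ)

/-- A joint strategy assigns to every node a colour from its colour set. -/
def Valid {V M : Type} (C : V → Finset M) (s : V → M) : Prop :=
  ∀ i, s i ∈ C i

/-- `s'` is a profitable deviation of the (non-empty) coalition
`K = {i | s i ≠ s' i}` from `s`. -/
def ProfDev {V M : Type} [Fintype V] (adj : V → V → Prop) (w : V → V → ℝ)
    (β : V → M → ℕ) (C : V → Finset M) (s s' : V → M) : Prop :=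
  Valid C s' ∧ s ≠ s' ∧
    ∀ i, s i ≠ s' i → payoff adj w β s i < payoff adj w β s' i

/-- A profitable deviation of a single player. -/
def UniDev {V M : Type} [Fintype V] (adj : V → V → Prop) (w : V → V → ℝ)
    (β : V → M → ℕ) (C : V → Finset M) (s s' : V → M) : Prop :=
  ProfDev adj w β C s s' ∧ ∃ i, ∀ j, j ≠ i → s j = s' j

/-- A Nash equilibrium: no single player has a profitable deviation. -/
def IsNash {V M : Type} [Fintype V] (adj : V → V → Prop) (w : V → V → ℝ)
    (β : V → M → ℕ) (C : V → Finset M) (s : V → M) : Prop :=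
  Valid C s ∧ ∀ s', ¬ UniDev adj w β C s s'

/-- A strong equilibrium: no coalition has a profitable deviation. -/
def IsStrong {V M : Type} [Fintype V] (adj : V → V → Prop) (w : V → V → ℝ)
    (β : V → M → ℕ) (C : V → Finset M) (s : V → M) : Prop :=
  Valid C s ∧ ∀ s', ¬ ProfDev adj w β C s s'

/-- There is a finite improvement path of length `L` starting at `s`
(each step a profitable single-player deviation) ending in a Nash equilibrium. -/
def ImpPath {V M : Type} [Fintype V] (adj : V → V → Prop) (w : V → V → ℝ)
    (β : V → M → ℕ) (C : V → Finset M) (s : V → M) (L : ℕ) : Prop :=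
  ∃ σ : ℕ → V → M, σ 0 = s ∧
    (∀ t, t < L → UniDev adj w β C (σ t) (σ (t + 1))) ∧
    IsNash adj w β C (σ L)

/-- There is a finite c-improvement path of length `L` starting at `s`
(each step a profitable coalition deviation) ending in a strong equilibrium. -/
def CImpPath {V M : Type} [Fintype V] (adj : V → V → Prop) (w : V → V → ℝ)
    (β : V → M → ℕ) (C : V → Finset M) (s : V → M) (L : ℕ) : Prop :=
  ∃ σ : ℕ → V → M, σ 0 = s ∧
    (∀ t, t < L → ProfDev adj w β C (σ t) (σ (t + 1))) ∧
    IsStrong adj w β C (σ L)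

/-- Adjacency of the simple cycle `1 → 2 → ⋯ → n → 1` on `Fin n`. -/
def cycAdj (n : ℕ) : Fin n → Fin n → Prop :=
  fun i j => (i.val + 1) % n = j.val

/-!
If no in-neighbour of `i` in the coalition adopted the colour `s' i`, then every in-neighbour that
agrees with `i` under `s'` already had that colour under `s`, so `i` would gain at least as much by
switching alone, contradicting the Nash property. Hence every deviating node that adopts a given
colour has a predecessor of the same kind, and in a finite set following predecessors must close up.
-/

section Game

variable {V M : Type} {adj : V → V → Prop} {w : V → V → ℝ} {β : V → M → ℕ} {C : V → Finset M}
  {s s' u : V → M} {i : V} {c : M}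

theorem Valid.update (hs : Valid C s) (hc : c ∈ C i) : Valid C (Function.update s i c) :=
  (Function.forall_update_iff s fun j d ↦ d ∈ C j).mpr ⟨hc, fun j _ ↦ hs j⟩

variable [Fintype V]

theorem payoff_le_payoff_of_imp (hw : ∀ j, adj j i → 0 ≤ w j i) (hi : s i = u i)
    (hsu : ∀ j, adj j i → s j = s i → u j = u i) :
    payoff adj w β s i ≤ payoff adj w β u i := by
  unfold payoff
  rw [hi]
  gcongr ?_ + _
  apply Finset.sum_le_sum_of_subset_of_nonneg
  · exact Finset.monotone_filter_right _ fun j _ hj ↦ ⟨hj.1, hsu j hj.1 (hj.2.trans hi.symm)⟩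
  · exact fun j hj _ ↦ hw j (Finset.mem_filter.mp hj).2.1

theorem IsNash.payoff_update_le (hs : IsNash adj w β C s) (hc : c ∈ C i) :
    payoff adj w β (Function.update s i c) i ≤ payoff adj w β s i := by
  by_contra! hlt
  have hne : s ≠ Function.update s i c := fun h ↦ hlt.ne (by rw [← h])
  have hgain : ∀ j, s j ≠ Function.update s i c j →
      payoff adj w β s j < payoff adj w β (Function.update s i c) j := by
    intro j hj
    obtain rfl : j = i := by
      by_contra hji
      exact hj (Function.update_of_ne hji c s).symm
    exact hlt
  exact hs.2 _ ⟨⟨hs.1.update hc, hne, hgain⟩, i, fun j hj ↦ (Function.update_of_ne hj c s).symm⟩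

theorem IsNash.exists_deviating_pred (hs : IsNash adj w β C s)
    (hw : ∀ j, adj j i → 0 ≤ w j i) (hi : s' i ∈ C i)
    (hlt : payoff adj w β s i < payoff adj w β s' i) :
    ∃ j, s j ≠ s' j ∧ adj j i ∧ s' j = s' i := by
  by_contra! hno
  have hagree : ∀ j, adj j i → s' j = s' i →
      Function.update s i (s' i) j = Function.update s i (s' i) i := by
    intro j hadj hcol
    have hj : s j = s' j := not_not.mp fun hne ↦ hno j hne hadj hcol
    rcases eq_or_ne j i with rfl | hji
    · rfl
    · rw [Function.update_of_ne hji, Function.update_self, hj, hcol]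
  have hle : payoff adj w β s' i ≤ payoff adj w β (Function.update s i (s' i)) i :=
    payoff_le_payoff_of_imp hw (Function.update_self i (s' i) s).symm hagree
  exact (hlt.trans_le (hle.trans (hs.payoff_update_le hi))).false

end Game

section Cycle

variable {α γ : Type*} {r : α → α → Prop} {q : γ → γ → Prop} {L : ℕ} {v : ℕ → α}

/-- The vertices `v 0, …, v (L - 1)` form a directed simple cycle of length `L` in the relation `r`.
The values of `v` from index `L` on are irrelevant, and a loop is a cycle of length `1`. -/
structure IsSimpleCycle (r : α → α → Prop) (L : ℕ) (v : ℕ → α) : Prop where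
  length_pos : 0 < L
  injOn : Set.InjOn v (Set.Iio L)
  rel : ∀ t < L, r (v t) (v ((t + 1) % L))

theorem IsSimpleCycle.two_le_length (hv : IsSimpleCycle r L v) (hr : ∀ a, ¬ r a a) : 2 ≤ L := by
  by_contra! hL
  obtain rfl : L = 1 := by have := hv.length_pos; omega
  exact hr (v 0) (hv.rel 0 one_pos)

theorem IsSimpleCycle.map (hv : IsSimpleCycle r L v) {f : α → γ} (hf : f.Injective)
    (hrq : ∀ a b, r a b → q (f a) (f b)) : IsSimpleCycle q L (f ∘ v) where
  length_pos := hv.length_pos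
  injOn := hf.comp_injOn hv.injOn
  rel t ht := hrq _ _ (hv.rel t ht)

theorem isSimpleCycle_iterate {f : α → α} {x : α} (hf : ∀ a, r a (f a))
    (hx : x ∈ Function.periodicPts f) :
    IsSimpleCycle r (Function.minimalPeriod f x) (f^[·] x) where
  length_pos := Function.minimalPeriod_pos_of_mem_periodicPts hx
  injOn := Function.iterate_injOn_Iio_minimalPeriod
  rel t _ := by
    rw [Function.iterate_mod_minimalPeriod_eq, Function.iterate_succ_apply']
    exact hf _

theorem nonempty_periodicPts [Finite α] [Nonempty α] (f : α → α) :
    (Function.periodicPts f).Nonempty := by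
  obtain ⟨a⟩ := ‹Nonempty α›
  obtain ⟨m, n, hmn, heq⟩ := Set.finite_univ.exists_lt_map_eq_of_forall_mem
    fun k : ℕ ↦ Set.mem_univ (f^[k] a)
  refine ⟨f^[m] a, Function.mk_mem_periodicPts (Nat.sub_pos_of_lt hmn) ?_⟩
  rw [Function.IsPeriodicPt, Function.IsFixedPt, ← Function.iterate_add_apply,
    Nat.sub_add_cancel hmn.le, heq]

-- A choice of predecessors permutes its periodic points, and its inverse there follows the edges.
theorem exists_isSimpleCycle_of_forall_exists_pred [Finite α] [Nonempty α]
    (hr : ∀ a, ∃ b, r b a) : ∃ L v, IsSimpleCycle r L v := by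
  choose pred hpred using hr
  let σ : Equiv.Perm (Function.periodicPts pred) :=
    Set.BijOn.equiv pred (Function.bijOn_periodicPts pred)
  obtain ⟨x, hx⟩ := nonempty_periodicPts pred
  have hσ : ∀ a : Function.periodicPts pred, r a (σ.symm a) := fun a ↦ by
    have hpa : pred (σ.symm a) = a := congrArg Subtype.val (σ.apply_symm_apply a)
    simpa only [hpa] using hpred (σ.symm a)
  have hcycle := isSimpleCycle_iterate (r := fun a b : Function.periodicPts pred ↦ r a b) hσ
    (σ.symm.injective.mem_periodicPts ⟨x, hx⟩)
  exact ⟨_, _, hcycle.map Subtype.val_injective fun _ _ h ↦ h⟩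

theorem exists_isSimpleCycle_mem {S : Set α} (hfin : S.Finite) (hne : S.Nonempty)
    (hr : ∀ a ∈ S, ∃ b ∈ S, r b a) : ∃ L v, IsSimpleCycle r L v ∧ ∀ t, v t ∈ S := by
  have : Finite S := hfin
  have : Nonempty S := hne.to_subtype
  obtain ⟨L, v, hv⟩ := exists_isSimpleCycle_of_forall_exists_pred (r := fun a b : S ↦ r a b)
    fun a ↦ let ⟨b, hb, hba⟩ := hr a a.2; ⟨⟨b, hb⟩, hba⟩
  exact ⟨L, _, hv.map Subtype.val_injective fun _ _ h ↦ h, fun t ↦ (v t).2⟩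

end Cycle

/-- Any profitable coalition deviation `s'` from a Nash equilibrium `s` of a
coordination game on a weighted directed graph with bonuses contains a
unicoloured directed simple cycle: in particular every deviating node has a
deviating predecessor switching to the same colour, and there is a directed
simple cycle all of whose nodes deviate and choose the same colour in `s'`. -/
theorem nash_coalition_deviation_has_unicoloured_cycle
    {V M : Type} [Fintype V]
    (adj : V → V → Prop) (hloop : ∀ i, ¬ adj i i)
    (w : V → V → ℝ) (hw : ∀ i j, adj i j → 0 ≤ w i j)
    (β : V → M → ℕ) (C : V → Finset M) (hC : ∀ i, (C i).Nonempty)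
    (s s' : V → M)
    (hNash : IsNash adj w β C s)
    (hdev : ProfDev adj w β C s s') :
    (∀ i, s i ≠ s' i → ∃ j, s j ≠ s' j ∧ adj j i ∧ s' j = s' i) ∧
    ∃ (L : ℕ) (v : ℕ → V), 2 ≤ L ∧
      (∀ t t', t < L → t' < L → v t = v t' → t = t') ∧
      (∀ t, t < L → adj (v t) (v ((t + 1) % L))) ∧
      (∀ t, t < L → s (v t) ≠ s' (v t)) ∧
      (∀ t, t < L → s' (v t) = s' (v 0)) := by
  have hpred : ∀ i, s i ≠ s' i → ∃ j, s j ≠ s' j ∧ adj j i ∧ s' j = s' i := fun i hi ↦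
    hNash.exists_deviating_pred (fun j ↦ hw j i) (hdev.1 i) (hdev.2.2 i hi)
  obtain ⟨i₀, hi₀⟩ := Function.ne_iff.mp hdev.2.1
  let S : Set V := {i | s i ≠ s' i ∧ s' i = s' i₀}
  have hS : ∀ i ∈ S, ∃ j ∈ S, adj j i := by
    rintro i ⟨hi, hcol⟩
    obtain ⟨j, hj, hji, hcol'⟩ := hpred i hi
    exact ⟨j, ⟨hj, hcol'.trans hcol⟩, hji⟩
  obtain ⟨L, v, hv, hmem⟩ := exists_isSimpleCycle_mem S.toFinite ⟨i₀, hi₀, rfl⟩ hS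
  exact ⟨hpred, L, v, hv.two_le_length hloop, fun _ _ ht ht' h ↦ hv.injOn ht ht' h, hv.rel,
    fun t _ ↦ (hmem t).1, fun t _ ↦ (hmem t).2.trans (hmem 0).2.symm⟩

end CG
end

section
/- There is a constant c (independent of the game) such that every coordination game with bonuses on an unweighted simple cycle on n nodes admits, from every joint strategy, a finite c-improvement path of length at most c·n (hence ending in a strong equilibrium). -/
open scoped Classical

namespace CG

/-!
On a cycle a node earns its bonus plus one if it copies its predecessor. As bonuses are integers,
among the best responses there is always one with the largest bonus, and a node already playing a
colour of largest bonus can only gain by copying its predecessor.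

Let the nodes revise in cyclic order, moving only when they can gain and then to a best response of
largest bonus. After `n - 1` revisions every node except the one about to revise best responds, so
the first idle revision from then on certifies that nobody can gain alone. It comes within two
rounds: if all nodes move in the first they all play a colour of largest bonus, and if all move in
the second each of them copies its predecessor, so a single colour travels around the whole cycle
and the last node to receive it already had it.

From such a strategy a coalition can only gain if it contains every node, since an unchanged
predecessor means no reason to change. Every node then earns more than its largest bonus, hence the
most it can ever earn, and one such deviation ends in a strong equilibrium.
-/

/-- `z` maximises `f` over the finite set `C`. -/
def IsArgmax {α γ : Type*} [LE γ] (f : α → γ) (C : Finset α) (z : α) : Prop :=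
  z ∈ C ∧ ∀ y ∈ C, f y ≤ f z

/-- The payoff, on a simple cycle, of a node with bonuses `b` that plays `y` while its predecessor
plays `x`. -/
noncomputable def reward {M : Type*} (b : M → ℕ) (x y : M) : ℕ :=
  b y + if x = y then 1 else 0

section Reward

variable {M : Type*} {b : M → ℕ} {C : Finset M} {x y z : M}

lemma reward_self (b : M → ℕ) (x : M) : reward b x x = b x + 1 := by simp [reward]

lemma reward_of_ne (h : x ≠ y) : reward b x y = b y := by simp [reward, h]

lemma le_reward (b : M → ℕ) (x y : M) : b y ≤ reward b x y := Nat.le_add_right _ _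

lemma reward_le_add_one (b : M → ℕ) (x y : M) : reward b x y ≤ b y + 1 := by
  unfold reward
  split_ifs <;> omega

lemma exists_isArgmax_reward_and_isArgmax (b : M → ℕ) (hC : C.Nonempty) (x : M) :
    ∃ y, IsArgmax (reward b x) C y ∧ IsArgmax b C y := by
  by_cases hx : IsArgmax b C x
  · refine ⟨x, ⟨hx.1, fun y hy => ?_⟩, hx⟩
    calc reward b x y ≤ b y + 1 := reward_le_add_one b x y
      _ ≤ b x + 1 := Nat.succ_le_succ (hx.2 y hy)
      _ = reward b x x := (reward_self b x).symm
  · obtain ⟨a, haC, ha⟩ := C.exists_max_image b hC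
    refine ⟨a, ⟨haC, fun y hy => le_trans ?_ (le_reward b x a)⟩, haC, ha⟩
    rcases eq_or_ne x y with rfl | hxy
    · have hlt : b x < b a := by
        by_contra! hle
        exact hx ⟨hy, fun z hz => (ha z hz).trans hle⟩
      rwa [reward_self]
    · rw [reward_of_ne hxy]
      exact ha y hy

lemma eq_of_reward_lt_reward (hyz : b y ≤ b z) (h : reward b x z < reward b x y) :
    y = x := by
  by_contra hyx
  rw [reward_of_ne (Ne.symm hyx)] at h
  exact (h.trans_le (hyz.trans (le_reward b x z))).false

end Reward

section ImprovementPaths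

variable {V M : Type} [Fintype V] {adj : V → V → Prop} {w : V → V → ℝ} {β : V → M → ℕ}
  {C : V → Finset M} {s s' : V → M}

lemma IsStrong.cImpPath_zero (h : IsStrong adj w β C s) : CImpPath adj w β C s 0 :=
  ⟨fun _ => s, rfl, fun _ ht => absurd ht (Nat.not_lt_zero _), h⟩

lemma ProfDev.cImpPath_succ {L : ℕ} (h : ProfDev adj w β C s s') (hs' : CImpPath adj w β C s' L) :
    CImpPath adj w β C s (L + 1) := by
  obtain ⟨σ, rfl, hσ, hstrong⟩ := hs'
  refine ⟨fun t => Nat.casesOn t s σ, rfl, fun t ht => ?_, hstrong⟩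
  cases t with
  | zero => exact h
  | succ t => exact hσ t (Nat.lt_of_succ_lt_succ ht)

lemma exists_cImpPath_of_chain {σ : ℕ → V → M} {T L : ℕ}
    (hσ : ∀ t < T, σ (t + 1) = σ t ∨ ProfDev adj w β C (σ t) (σ (t + 1)))
    (hT : CImpPath adj w β C (σ T) L) : ∃ L' ≤ T + L, CImpPath adj w β C (σ 0) L' := by
  induction T generalizing L with
  | zero => exact ⟨L, by omega, hT⟩
  | succ T ih =>
    have hσ' := fun t ht => hσ t (Nat.lt_succ_of_lt ht)
    rcases hσ T T.lt_succ_self with hstay | hdev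
    · rw [hstay] at hT
      obtain ⟨L', hL', hpath⟩ := ih hσ' hT
      exact ⟨L', by omega, hpath⟩
    · obtain ⟨L', hL', hpath⟩ := ih hσ' (hdev.cImpPath_succ hT)
      exact ⟨L', by omega, hpath⟩

end ImprovementPaths

section Cycle

open scoped Fin.CommRing

variable {n : ℕ} [NeZero n]

lemma cycAdj_iff_eq_sub_one {i j : Fin n} : cycAdj n j i ↔ j = i - 1 := by
  rw [eq_sub_iff_add_eq, Fin.ext_iff, Fin.val_add, Fin.val_one', Nat.add_mod_mod]
  rfl

lemma sub_one_ne_self (hn : 2 ≤ n) (i : Fin n) : i - 1 ≠ i := by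
  have := Fin.nontrivial_iff_two_le.mpr hn
  exact fun h => one_ne_zero (sub_eq_self.mp h)

lemma natCast_ne_natCast_add (t : ℕ) {k : ℕ} (hk0 : 0 < k) (hkn : k < n) :
    (t : Fin n) ≠ ((t + k : ℕ) : Fin n) := by
  rw [Nat.cast_add, ne_eq, left_eq_add, Fin.natCast_eq_zero]
  exact Nat.not_dvd_of_pos_of_lt hk0 hkn

lemma forall_of_forall_add_one {p : Fin n → Prop} (hstep : ∀ i, p i → p (i + 1)) {i : Fin n}
    (hi : p i) (j : Fin n) : p j := by
  have hadd (k : ℕ) : p (i + k) := by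
    induction k with
    | zero => simpa using hi
    | succ k ih => simpa [add_assoc] using hstep _ ih
  simpa using hadd (j - i).val

variable {M : Type} {β : Fin n → M → ℕ} {C : Fin n → Finset M} {s s' : Fin n → M}

lemma payoff_cycAdj (β : Fin n → M → ℕ) (s : Fin n → M) (i : Fin n) :
    payoff (cycAdj n) (fun _ _ => 1) β s i = (reward (β i) (s (i - 1)) (s i) : ℝ) := by
  have hfilter : (Finset.univ.filter fun j => cycAdj n j i ∧ s j = s i) =
      if s (i - 1) = s i then {i - 1} else ∅ := by
    ext j
    split_ifs with h <;> simp only [cycAdj_iff_eq_sub_one, Finset.mem_filter] <;> aesop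
  rw [payoff, hfilter, reward]
  split_ifs <;> simp [add_comm]

lemma profDev_cycAdj_iff : ProfDev (cycAdj n) (fun _ _ => 1) β C s s' ↔
    Valid C s' ∧ s ≠ s' ∧ ∀ i, s i ≠ s' i →
      reward (β i) (s (i - 1)) (s i) < reward (β i) (s' (i - 1)) (s' i) := by
  simp only [ProfDev, payoff_cycAdj, Nat.cast_lt]

/-- On a simple cycle, node `i` plays a best response to its predecessor in `s`. -/
def BestResponds (β : Fin n → M → ℕ) (C : Fin n → Finset M) (s : Fin n → M) (i : Fin n) : Prop :=
  IsArgmax (reward (β i) (s (i - 1))) (C i) (s i)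

lemma ProfDev.ne_of_bestResponds (hbest : ∀ i, BestResponds β C s i)
    (hdev : ProfDev (cycAdj n) (fun _ _ => 1) β C s s') (i : Fin n) : s i ≠ s' i := by
  obtain ⟨hvalid, hne, hlt⟩ := profDev_cycAdj_iff.mp hdev
  intro hi
  refine hne (funext fun j => forall_of_forall_add_one (p := fun i => s i = s' i) ?_ hi j)
  intro j hj
  by_contra hj'
  have hgain := hlt (j + 1) hj'
  have hopt := (hbest (j + 1)).2 _ (hvalid (j + 1))
  rw [add_sub_cancel_right] at hgain hopt
  rw [← hj] at hgain
  exact (hgain.trans_le hopt).false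

lemma isStrong_of_bonus_lt_reward (hs : Valid C s)
    (h : ∀ i, ∀ y ∈ C i, β i y < reward (β i) (s (i - 1)) (s i)) :
    IsStrong (cycAdj n) (fun _ _ => 1) β C s := by
  refine ⟨hs, fun s' hdev => ?_⟩
  obtain ⟨hvalid, hne, hlt⟩ := profDev_cycAdj_iff.mp hdev
  obtain ⟨i, hi⟩ := Function.ne_iff.mp hne
  exact ((hlt i hi).trans_le ((reward_le_add_one _ _ _).trans (h i _ (hvalid i)))).false

lemma exists_cImpPath_of_bestResponds (hbest : ∀ i, BestResponds β C s i) :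
    ∃ L ≤ 1, CImpPath (cycAdj n) (fun _ _ => 1) β C s L := by
  have hs : Valid C s := fun i => (hbest i).1
  by_cases hstrong : IsStrong (cycAdj n) (fun _ _ => 1) β C s
  · exact ⟨0, zero_le_one, hstrong.cImpPath_zero⟩
  obtain ⟨s', hdev⟩ : ∃ s', ProfDev (cycAdj n) (fun _ _ => 1) β C s s' := by
    by_contra! hnone
    exact hstrong ⟨hs, hnone⟩
  obtain ⟨hvalid, -, hlt⟩ := profDev_cycAdj_iff.mp hdev
  have hs' : IsStrong (cycAdj n) (fun _ _ => 1) β C s' :=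
    isStrong_of_bonus_lt_reward hvalid fun i y hy =>
      calc β i y ≤ reward (β i) (s (i - 1)) y := le_reward _ _ _
        _ ≤ reward (β i) (s (i - 1)) (s i) := (hbest i).2 y hy
        _ < reward (β i) (s' (i - 1)) (s' i) := hlt i (hdev.ne_of_bestResponds hbest i)
  exact ⟨1, le_rfl, hdev.cImpPath_succ hs'.cImpPath_zero⟩

section Revise

variable {hC : ∀ i, (C i).Nonempty} {i j : Fin n}

/-- Node `i` revises its colour: it keeps it if that is a best response, and otherwise switches to
a best response whose bonus is largest in `C i`. -/
noncomputable def revise (β : Fin n → M → ℕ) (hC : ∀ i, (C i).Nonempty) (s : Fin n → M)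
    (i : Fin n) : Fin n → M :=
  if BestResponds β C s i then s
  else Function.update s i (exists_isArgmax_reward_and_isArgmax (β i) (hC i) (s (i - 1))).choose

lemma revise_of_bestResponds (h : BestResponds β C s i) : revise β hC s i = s := if_pos h

lemma revise_of_ne (h : j ≠ i) : revise β hC s i j = s j := by
  unfold revise
  split_ifs
  · rfl
  · exact Function.update_of_ne h _ _

lemma isArgmax_reward_revise_self : IsArgmax (reward (β i) (s (i - 1))) (C i)
    (revise β hC s i i) := by
  unfold revise
  split_ifs with h
  · exact h
  · rw [Function.update_self]
    exact (exists_isArgmax_reward_and_isArgmax (β i) (hC i) (s (i - 1))).choose_spec.1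

lemma isArgmax_bonus_revise_self (h : ¬ BestResponds β C s i) :
    IsArgmax (β i) (C i) (revise β hC s i i) := by
  rw [revise, if_neg h, Function.update_self]
  exact (exists_isArgmax_reward_and_isArgmax (β i) (hC i) (s (i - 1))).choose_spec.2

lemma reward_lt_reward_revise (hs : Valid C s) (h : ¬ BestResponds β C s i) :
    reward (β i) (s (i - 1)) (s i) < reward (β i) (s (i - 1)) (revise β hC s i i) := by
  by_contra! hle
  exact h ⟨hs i, fun y hy => (isArgmax_reward_revise_self.2 y hy).trans hle⟩

lemma valid_revise (hs : Valid C s) : Valid C (revise β hC s i) := by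
  intro j
  rcases eq_or_ne j i with rfl | hji
  · exact isArgmax_reward_revise_self.1
  · rw [revise_of_ne hji]
    exact hs j

lemma bestResponds_revise_self (hn : 2 ≤ n) : BestResponds β C (revise β hC s i) i := by
  rw [BestResponds, revise_of_ne (sub_one_ne_self hn i)]
  exact isArgmax_reward_revise_self

lemma bestResponds_revise_of_ne (h : BestResponds β C s j) (hj : j ≠ i) (hj' : j - 1 ≠ i) :
    BestResponds β C (revise β hC s i) j := by
  rwa [BestResponds, revise_of_ne hj, revise_of_ne hj']

lemma revise_eq_or_profDev (hn : 2 ≤ n) (hs : Valid C s) :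
    revise β hC s i = s ∨ ProfDev (cycAdj n) (fun _ _ => 1) β C s (revise β hC s i) := by
  by_cases h : BestResponds β C s i
  · exact Or.inl (revise_of_bestResponds h)
  have hlt := reward_lt_reward_revise (hC := hC) hs h
  refine Or.inr (profDev_cycAdj_iff.mpr ⟨valid_revise hs, fun heq => ?_, fun j hj => ?_⟩)
  · rw [← heq] at hlt
    exact hlt.false
  · obtain rfl : j = i := by
      by_contra hji
      exact hj (revise_of_ne hji).symm
    rwa [revise_of_ne (sub_one_ne_self hn j)]

end Revise

section Sweep

variable {hC : ∀ i, (C i).Nonempty} {t k : ℕ}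

/-- The joint strategy after `t` revisions made from `s` in the cyclic order `0, 1, …, n - 1, 0, …`;
revision number `t` is made by node `t mod n`. -/
noncomputable def sweep (β : Fin n → M → ℕ) (hC : ∀ i, (C i).Nonempty) (s : Fin n → M) :
    ℕ → Fin n → M
  | 0 => s
  | t + 1 => revise β hC (sweep β hC s t) (t : Fin n)

lemma valid_sweep (hs : Valid C s) (t : ℕ) : Valid C (sweep β hC s t) := by
  induction t with
  | zero => exact hs
  | succ t ih => exact valid_revise ih

lemma sweep_add_apply (hk : k < n) : sweep β hC s (t + 1 + k) t = sweep β hC s (t + 1) t := by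
  induction k with
  | zero => rfl
  | succ k ih =>
    have hne := natCast_ne_natCast_add t k.succ_pos hk
    rw [← ih (by omega), ← Nat.add_assoc, sweep, revise_of_ne]
    rwa [show t + 1 + k = t + (k + 1) by omega]

lemma sweep_add_length_apply : sweep β hC s (t + n) t = sweep β hC s (t + 1) t := by
  have hn := NeZero.pos n
  rw [← sweep_add_apply (k := n - 1) (by omega), show t + 1 + (n - 1) = t + n by omega]

lemma bestResponds_sweep_add (hk : k + 1 < n) : BestResponds β C (sweep β hC s (t + 1 + k)) t := by
  induction k with
  | zero => exact bestResponds_revise_self hk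
  | succ k ih =>
    rw [← Nat.add_assoc, sweep, show t + 1 + k = t + (k + 1) by omega]
    refine bestResponds_revise_of_ne ?_ (natCast_ne_natCast_add t (by omega) (by omega)) ?_
    · rw [show t + (k + 1) = t + 1 + k by omega]
      exact ih (by omega)
    · rw [ne_eq, sub_eq_iff_eq_add, ← Nat.cast_succ]
      exact natCast_ne_natCast_add t (k := k + 2) (by omega) (by omega)

lemma bestResponds_sweep_of_ne (ht : n ≤ t + 1) {j : Fin n} (hj : j ≠ t) :
    BestResponds β C (sweep β hC s t) j := by
  let k := (j - t).val
  have hkn : k < n := (j - t).isLt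
  have hk0 : 0 < k := Fin.pos_iff_ne_zero.mpr (sub_ne_zero.mpr hj)
  have hlast : ((t + k - n : ℕ) : Fin n) = j := by
    rw [← add_zero ((t + k - n : ℕ) : Fin n), ← Fin.natCast_self n, ← Nat.cast_add,
      Nat.sub_add_cancel (by omega), Nat.cast_add, Fin.cast_val_eq_self, add_sub_cancel]
  have hbest := bestResponds_sweep_add (β := β) (hC := hC) (s := s) (t := t + k - n)
    (k := n - 1 - k) (by omega)
  rwa [hlast, show t + k - n + 1 + (n - 1 - k) = t by omega] at hbest

lemma sweep_succ_eq_of_not_bestResponds (hs : Valid C s)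
    (h₁ : ¬ BestResponds β C (sweep β hC s (t + 1)) (t + 1 : ℕ))
    (h₂ : ¬ BestResponds β C (sweep β hC s (t + 1 + n)) (t + 1 + n : ℕ)) :
    sweep β hC s (t + 1 + n + 1) (t + 1 + n : ℕ) = sweep β hC s (t + n + 1) (t + n : ℕ) := by
  have hnode : ((t + 1 + n : ℕ) : Fin n) = (t + 1 : ℕ) := by simp
  have hpred : ((t + 1 + n : ℕ) : Fin n) - 1 = (t + n : ℕ) := by simp
  have hmax : IsArgmax (β (t + 1 + n : ℕ)) (C (t + 1 + n : ℕ))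
      (sweep β hC s (t + 1 + n) (t + 1 + n : ℕ)) := by
    rw [hnode, sweep_add_length_apply]
    exact isArgmax_bonus_revise_self h₁
  calc sweep β hC s (t + 1 + n + 1) (t + 1 + n : ℕ)
      = sweep β hC s (t + 1 + n) ((t + 1 + n : ℕ) - 1) :=
        eq_of_reward_lt_reward (hmax.2 _ (valid_sweep hs _ _))
          (reward_lt_reward_revise (valid_sweep hs _) h₂)
    _ = sweep β hC s (t + n + 1) (t + n : ℕ) := by rw [hpred, Nat.add_right_comm]

lemma exists_bestResponds_sweep (hs : Valid C s) (t : ℕ) :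
    ∃ T, t < T ∧ T ≤ t + 2 * n ∧ BestResponds β C (sweep β hC s T) T := by
  have hn := NeZero.pos n
  by_contra! hmoves
  have hconst : ∀ k ≤ n, sweep β hC s (t + k + n + 1) (t + k + n : ℕ) =
      sweep β hC s (t + n + 1) (t + n : ℕ) := by
    intro k hk
    induction k with
    | zero => rfl
    | succ k ih =>
      rw [← ih (by omega)]
      exact sweep_succ_eq_of_not_bestResponds (t := t + k) hs
        (hmoves (t + k + 1) (by omega) (by omega)) (hmoves (t + k + 1 + n) (by omega) (by omega))
  have hstay : sweep β hC s (t + n + n) (t + n + n : ℕ) =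
      sweep β hC s (t + n + 1) (t + n : ℕ) := by
    rw [← sweep_add_length_apply]
    simp
  have hlt := reward_lt_reward_revise (hC := hC) (valid_sweep hs _)
    (hmoves (t + n + n) (by omega) (by omega))
  exact hlt.ne (congrArg _ (hstay.trans (hconst n le_rfl).symm))

lemma exists_forall_bestResponds_sweep (hn : 2 ≤ n) (hs : Valid C s) :
    ∃ T ≤ 3 * n - 2, ∀ i, BestResponds β C (sweep β hC s T) i := by
  obtain ⟨T, hlt, hle, hbest⟩ := exists_bestResponds_sweep (hC := hC) hs (n - 2)
  refine ⟨T, by omega, fun i => ?_⟩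
  rcases eq_or_ne i T with rfl | hi
  · exact hbest
  · exact bestResponds_sweep_of_ne (by omega) hi

end Sweep

end Cycle

theorem cycle_bonuses_cimprovement_path_general {n : ℕ} (hn : 2 ≤ n) {M : Type}
    (β : Fin n → M → ℕ) (C : Fin n → Finset M) (s : Fin n → M) (hs : Valid C s) :
    ∃ L < 3 * n, CImpPath (cycAdj n) (fun _ _ => 1) β C s L := by
  have : NeZero n := ⟨by omega⟩
  have hC : ∀ i, (C i).Nonempty := fun i => ⟨s i, hs i⟩
  obtain ⟨T, hT, hbest⟩ := exists_forall_bestResponds_sweep (β := β) (hC := hC) hn hs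
  obtain ⟨L, hL, hpath⟩ := exists_cImpPath_of_bestResponds hbest
  obtain ⟨L', hL', hpath'⟩ :=
    exists_cImpPath_of_chain (fun t _ => revise_eq_or_profDev hn (valid_sweep hs t)) hpath
  exact ⟨L', by omega, hpath'⟩

/-- There is a constant `c` such that every coordination game with bonuses on
an unweighted simple cycle on `n` nodes admits, from every joint strategy, a
finite c-improvement path of length at most `c * n` ending in a strong
equilibrium. -/
theorem cycle_bonuses_cimprovement_path :
    ∃ c : ℕ,
      ∀ (n : ℕ), 2 ≤ n →
      ∀ (M : Type) [Fintype M],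
      ∀ (β : Fin n → M → ℕ) (C : Fin n → Finset M),
        (∀ i, (C i).Nonempty) →
        ∀ s : Fin n → M, Valid C s →
          ∃ L, L ≤ c * n ∧ CImpPath (cycAdj n) (fun _ _ => 1) β C s L := by
  exact ⟨3, fun n hn M _ β C _ s hs =>
    (cycle_bonuses_cimprovement_path_general hn β C s hs).imp fun _ h => ⟨h.1.le, h.2⟩⟩

end CG
end

section
/- There is a constant c (independent of the game) such that every coordination game without bonuses on an unweighted open chain of m cycles, each cycle having n nodes, admits, from every joint strategy, a finite improvement path of length at most c·n·m² (hence ending in a Nash equilibrium). -/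
open scoped Classical

namespace CG

/-- Adjacency of a chain of `m` cycles, each of `n` nodes: `node j i` is the
`(i+1)`-st node of the `(j+1)`-st cycle (`0`-based indices). -/
def chainAdj {V : Type} (m n : ℕ) (node : ℕ → ℕ → V) : V → V → Prop :=
  fun u v => ∃ j i, j < m ∧ i < n ∧ u = node j i ∧ v = node j ((i + 1) % n)

/-- `node`, `k` describe an open chain of `m ≥ 2` simple cycles, each on `n ≥ 3`
nodes, where consecutive cycles `C_j, C_{j+1}` share exactly the node
`node j 0 = node (j+1) (k j)` (with `1 ≤ k j < n`) and the cycles are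
otherwise pairwise disjoint, and every vertex lies on some cycle. -/
def IsOpenChain {V : Type} (m n : ℕ) (node : ℕ → ℕ → V) (k : ℕ → ℕ) : Prop :=
  2 ≤ m ∧ 3 ≤ n ∧
  (∀ j, j + 1 < m → 1 ≤ k j ∧ k j < n) ∧
  (∀ j, j + 1 < m → node j 0 = node (j + 1) (k j)) ∧
  (∀ j i j' i', j < m → i < n → j' < m → i' < n → node j i = node j' i' →
      (j = j' ∧ i = i') ∨ (j' = j + 1 ∧ i = 0 ∧ i' = k j) ∨
      (j = j' + 1 ∧ i' = 0 ∧ i = k j')) ∧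
  (∀ v : V, ∃ j i, j < m ∧ i < n ∧ node j i = v)

/-- As `IsOpenChain`, but additionally the last cycle shares exactly the node
`node (m-1) 0 = node 0 (k (m-1))` with the first one. -/
def IsClosedChain {V : Type} (m n : ℕ) (node : ℕ → ℕ → V) (k : ℕ → ℕ) : Prop :=
  2 ≤ m ∧ 3 ≤ n ∧
  (∀ j, j < m → 1 ≤ k j ∧ k j < n) ∧
  (∀ j, j + 1 < m → node j 0 = node (j + 1) (k j)) ∧
  node (m - 1) 0 = node 0 (k (m - 1)) ∧
  (∀ j i j' i', j < m → i < n → j' < m → i' < n → node j i = node j' i' →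
      (j = j' ∧ i = i') ∨ (j' = j + 1 ∧ i = 0 ∧ i' = k j) ∨
      (j = j' + 1 ∧ i' = 0 ∧ i = k j') ∨
      (j = m - 1 ∧ j' = 0 ∧ i = 0 ∧ i' = k (m - 1)) ∨
      (j' = m - 1 ∧ j = 0 ∧ i' = 0 ∧ i = k (m - 1))) ∧
  (∀ v : V, ∃ j i, j < m ∧ i < n ∧ node j i = v)

/-!
Unstable nodes repeatedly copy a predecessor. The cycles are stabilized one after the other: the
part of the chain stabilized so far can be entered only through its gate, the node it shares with
the next cycle, and what has to be controlled is the cost of repairing this part once its gate is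
unstable. To repair the part obtained by attaching a cycle, let its root (the new gate) follow a
predecessor, if possible one outside the part, sweep along the arc from the root to the old gate,
repair the old part, and sweep along the arc from the old gate back to the root. If this makes the
root unstable again, the last node before the root has just adopted the colour of the old gate; when
the root follows it, the second sweep stops at the old gate at the latest, because that gate already
has the colour being passed on. So each cycle adds only `O(n)` to the cost of a repair, and
stabilizing all `m` cycles takes `O(n * m ^ 2)` steps. The induction starts from a single node, to
which the first cycle is attached.
-/

section CopyDynamics

variable {V M : Type*}

/-- A node is stable if it agrees with some predecessor or has no predecessor's colour available.
In a graph of in-degree at most two this makes its colour a best response. -/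
def StableAt (adj : V → V → Prop) (C : V → Finset M) (s : V → M) (v : V) : Prop :=
  (∃ u, adj u v ∧ s u = s v) ∨ ∀ u, adj u v → s u ∉ C v

/-- All nodes of `T` are stable. -/
def StableOn (adj : V → V → Prop) (C : V → Finset M) (s : V → M) (T : Set V) : Prop :=
  ∀ v ∈ T, StableAt adj C s v

/-- An unstable node adopts the colour of one of its predecessors. -/
def CopyStep (adj : V → V → Prop) (C : V → Finset M) (s t : V → M) : Prop :=
  ∃ u v, adj u v ∧ s u ∈ C v ∧ ¬ StableAt adj C s v ∧ t = Function.update s v (s u)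

/-- `t` is obtained from `s` by at most `B` copy steps. -/
inductive ReachesWithin (adj : V → V → Prop) (C : V → Finset M) :
    ℕ → (V → M) → (V → M) → Prop
  | refl (B : ℕ) (s : V → M) : ReachesWithin adj C B s s
  | head {B : ℕ} {s t u : V → M} :
      CopyStep adj C s t → ReachesWithin adj C B t u → ReachesWithin adj C (B + 1) s u

/-- The nodes of `T` together with their predecessors, whose colours determine stability on `T`. -/
def inNbhd (adj : V → V → Prop) (T : Set V) : Set V :=
  T ∪ {u | ∃ v ∈ T, adj u v}

theorem inNbhd_union (adj : V → V → Prop) (S T : Set V) :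
    inNbhd adj (S ∪ T) = inNbhd adj S ∪ inNbhd adj T := by
  ext v
  simp only [inNbhd, Set.mem_union, Set.mem_ofPred_eq]
  grind

/-- From every strategy that is stable on `T`, at most `B` copy steps inside `S` achieve stability
on `S`. -/
def Stabilizable (adj : V → V → Prop) (C : V → Finset M) (T S : Set V) (B : ℕ) : Prop :=
  ∀ s, StableOn adj C s T →
    ∃ s', ReachesWithin adj C B s s' ∧ Set.EqOn s' s Sᶜ ∧ StableOn adj C s' S

variable {adj : V → V → Prop} {C : V → Finset M} {A B : ℕ} {s t u : V → M} {S T U : Set V}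

namespace ReachesWithin

theorem mono (h : ReachesWithin adj C A s t) (hAB : A ≤ B) : ReachesWithin adj C B s t := by
  induction h generalizing B with
  | refl A s => exact refl B s
  | head hstep _ ih =>
    obtain ⟨B, rfl⟩ := Nat.exists_eq_succ_of_ne_zero (by omega : B ≠ 0)
    exact head hstep (ih (by omega))

theorem trans (h₁ : ReachesWithin adj C A s t) (h₂ : ReachesWithin adj C B t u) :
    ReachesWithin adj C (A + B) s u := by
  induction h₁ with
  | refl A s => exact h₂.mono (Nat.le_add_left B A)
  | head hstep _ ih => exact (head hstep (ih h₂)).mono (by omega)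

theorem single (h : CopyStep adj C s t) : ReachesWithin adj C 1 s t :=
  head h (refl 0 t)

end ReachesWithin

theorem StableOn.mono (h : StableOn adj C s T) (hST : S ⊆ T) : StableOn adj C s S :=
  fun v hv => h v (hST hv)

theorem StableOn.union (hS : StableOn adj C s S) (hT : StableOn adj C s T) :
    StableOn adj C s (S ∪ T) :=
  fun v hv => hv.elim (hS v) (hT v)

theorem StableOn.of_diff_singleton {v : V} (hT : StableOn adj C s (T \ {v}))
    (hv : StableAt adj C s v) : StableOn adj C s T := by
  intro w hw
  by_cases hwv : w = v
  · exact hwv ▸ hv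
  · exact hT w ⟨hw, hwv⟩

theorem StableOn.congr (h : StableOn adj C s T) (heq : Set.EqOn t s (inNbhd adj T)) :
    StableOn adj C t T := by
  intro v hv
  have hpred : ∀ u, adj u v → t u = s u := fun u hu => heq (.inr ⟨v, hv, hu⟩)
  refine (h v hv).imp ?_ ?_
  · rintro ⟨u, hu, huv⟩
    exact ⟨u, hu, by rw [hpred u hu, huv, heq (.inl hv)]⟩
  · exact fun hC u hu => hpred u hu ▸ hC u hu

theorem not_stableAt_iff {v : V} :
    ¬ StableAt adj C s v ↔ (∀ u, adj u v → s u ≠ s v) ∧ ∃ u, adj u v ∧ s u ∈ C v := by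
  simp [StableAt]

theorem stableAt_update {u v : V} (hu : adj u v) (hne : u ≠ v) :
    StableAt adj C (Function.update s v (s u)) v :=
  .inl ⟨u, hu, by rw [Function.update_self, Function.update_of_ne hne]⟩

theorem ne_of_not_stableAt {u v : V} (hu : adj u v) (hv : ¬ StableAt adj C s v) : u ≠ v := by
  rintro rfl
  exact hv (.inl ⟨u, hu, rfl⟩)

theorem eqOn_update (s : V → M) (v : V) (a : M) : Set.EqOn (Function.update s v a) s {v}ᶜ :=
  fun _ hw => Function.update_of_ne hw a s

theorem exists_stableAt (s : V → M) (v : V) :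
    ∃ s', ReachesWithin adj C 1 s s' ∧ Set.EqOn s' s {v}ᶜ ∧ StableAt adj C s' v ∧
      (s' v = s v ∨ ¬ StableAt adj C s v ∧ ∃ u, adj u v ∧ s' v = s u) := by
  by_cases hv : StableAt adj C s v
  · exact ⟨s, .refl 1 s, Set.eqOn_refl s _, hv, .inl rfl⟩
  · obtain ⟨-, u, hu, huC⟩ := not_stableAt_iff.1 hv
    exact ⟨_, .single ⟨u, v, hu, huC, hv, rfl⟩, eqOn_update s v _,
      stableAt_update hu (ne_of_not_stableAt hu hv),
      .inr ⟨hv, u, hu, Function.update_self ..⟩⟩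

namespace Stabilizable

theorem mono (h : Stabilizable adj C T S A) (hTU : T ⊆ U) (hAB : A ≤ B) :
    Stabilizable adj C U S B := by
  intro s hs
  obtain ⟨s', hr, hrest⟩ := h s (hs.mono hTU)
  exact ⟨s', hr.mono hAB, hrest⟩

theorem trans (h₁ : Stabilizable adj C T S A) (h₂ : Stabilizable adj C S U B) (hSU : S ⊆ U) :
    Stabilizable adj C T U (A + B) := by
  intro s hs
  obtain ⟨s₁, hr₁, heq₁, hst₁⟩ := h₁ s hs
  obtain ⟨s₂, hr₂, heq₂, hst₂⟩ := h₂ s₁ hst₁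
  exact ⟨s₂, hr₁.trans hr₂,
    heq₂.trans (heq₁.mono (Set.compl_subset_compl.2 hSU)), hst₂⟩

theorem singleton (v : V) : Stabilizable adj C ∅ {v} 1 := by
  intro s _
  obtain ⟨s', hr, heq, hst, -⟩ := exists_stableAt (adj := adj) (C := C) s v
  exact ⟨s', hr, heq, by simpa [StableOn] using hst⟩

end Stabilizable

end CopyDynamics

section Arcs

variable {V M : Type*}

/-- `c p, …, c q` are distinct nodes, each having no predecessor other than the previous one, except
for `c p`, whose predecessors are arbitrary. -/
structure IsArc (adj : V → V → Prop) (c : ℕ → V) (p q : ℕ) : Prop where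
  injOn : Set.InjOn c (Set.Icc p q)
  eq_of_adj : ∀ i, p ≤ i → i < q → ∀ u, adj u (c (i + 1)) → u = c i

variable {adj : V → V → Prop} {C : V → Finset M} {c : ℕ → V} {p q : ℕ}

namespace IsArc

theorem mono (h : IsArc adj c p q) {p' q' : ℕ} (hp : p ≤ p') (hq : q' ≤ q) :
    IsArc adj c p' q' where
  injOn := h.injOn.mono (Set.Icc_subset_Icc hp hq)
  eq_of_adj i hi hi' := h.eq_of_adj i (hp.trans hi) (hi'.trans_le hq)

theorem succ_notMem (h : IsArc adj c p (q + 1)) (hpq : p ≤ q) :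
    c (q + 1) ∉ c '' Set.Icc p q := by
  rw [h.injOn.mem_image_iff (Set.Icc_subset_Icc_right q.le_succ) ⟨hpq.trans q.le_succ, le_rfl⟩]
  exact fun hmem => q.not_succ_le_self hmem.2

theorem inNbhd_subset (h : IsArc adj c p q) :
    inNbhd adj (c '' Set.Ioc p q) ⊆ c '' Set.Icc p q := by
  rintro v (hv | ⟨_, ⟨i, hi, rfl⟩, hv⟩)
  · exact Set.image_mono Set.Ioc_subset_Icc_self hv
  · obtain ⟨i, rfl⟩ := Nat.exists_eq_succ_of_ne_zero (by grind : i ≠ 0)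
    exact ⟨i, by grind, (h.eq_of_adj i (by grind) (by grind) v hv).symm⟩

-- Along the sweep a new colour can only be passed on by a node that has just changed colour; hence
-- if the arc beyond its second node was stable before, a changed last node carries the colour of
-- `c p`.
theorem exists_sweep (h : IsArc adj c p q) (hpq : p ≤ q) (s : V → M) :
    ∃ s', ReachesWithin adj C (q - p) s s' ∧ Set.EqOn s' s (c '' Set.Ioc p q)ᶜ ∧
      StableOn adj C s' (c '' Set.Ioc p q) ∧
      (StableOn adj C s (c '' Set.Ioc (p + 1) q) →
        s' (c q) = s (c p) ∨ p < q ∧ s' (c q) = s (c q)) := by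
  induction q, hpq using Nat.le_induction with
  | base => exact ⟨s, .refl _ s, Set.eqOn_refl s _, by simp [StableOn], fun _ => .inl rfl⟩
  | succ q hpq ih =>
    have hq : IsArc adj c p q := h.mono le_rfl q.le_succ
    have hnotMem := h.succ_notMem hpq
    have hIoc : c '' Set.Ioc p (q + 1) = insert (c (q + 1)) (c '' Set.Ioc p q) := by
      rw [← Set.image_insert_eq]
      congr 1
      grind
    obtain ⟨s₁, hr₁, heq₁, hst₁, hend₁⟩ := ih hq
    obtain ⟨s₂, hr₂, heq₂, hst₂, hmove⟩ := exists_stableAt (adj := adj) (C := C) s₁ (c (q + 1))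
    have hlast : s₁ (c (q + 1)) = s (c (q + 1)) :=
      heq₁ fun hmem => hnotMem (Set.image_mono Set.Ioc_subset_Icc_self hmem)
    refine ⟨s₂, (hr₁.trans hr₂).mono (by omega), ?_, ?_, fun hs => ?_⟩
    · rw [hIoc]
      exact fun v hv => (heq₂ (by grind)).trans (heq₁ (by grind))
    · rw [hIoc]
      rintro v (rfl | hv)
      · exact hst₂
      · refine hst₁.congr (heq₂.mono ?_) v hv
        rintro w hw rfl
        exact hnotMem (hq.inNbhd_subset hw)
    · rcases hmove with hsame | ⟨hunst, u, hu, hcopy⟩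
      · exact .inr ⟨by omega, hsame.trans hlast⟩
      obtain rfl := h.eq_of_adj q hpq q.lt_succ_self u hu
      rcases hend₁ (hs.mono (Set.image_mono (Set.Ioc_subset_Ioc_right q.le_succ))) with
        hp | ⟨hlt, hsame⟩
      · exact .inl (hcopy.trans hp)
      · refine absurd ?_ hunst
        have hstable : StableOn adj C s {c (q + 1)} :=
          hs.mono (by simpa using ⟨q + 1, by grind, rfl⟩)
        refine hstable.congr ?_ _ rfl
        rintro v (rfl | ⟨_, rfl, hv⟩)
        · exact hlast
        · rwa [h.eq_of_adj q hpq q.lt_succ_self v hv]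

end IsArc

end Arcs

section AttachedCycles

variable {V M : Type*}

/-- A set `S` of nodes whose only entrance is the gate `x`, that is, all other nodes of `S` have
their predecessors in `S`. It takes `A` copy steps to restore stability on `S` if only the gate is
unstable, and `B` copy steps to achieve it from an arbitrary strategy. -/
structure GatedPart (adj : V → V → Prop) (C : V → Finset M) (S : Set V) (x : V) (A B : ℕ) :
    Prop where
  inNbhd_subset : inNbhd adj (S \ {x}) ⊆ S
  repair : Stabilizable adj C (S \ {x}) S A
  stabilize : Stabilizable adj C ∅ S B

namespace GatedPart

theorem singleton (adj : V → V → Prop) (C : V → Finset M) (v : V) :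
    GatedPart adj C {v} v 1 1 where
  inNbhd_subset := by simp [inNbhd]
  repair := by simpa using Stabilizable.singleton v
  stabilize := .singleton v

theorem mono {adj : V → V → Prop} {C : V → Finset M} {S : Set V} {x : V} {A B A' B' : ℕ}
    (h : GatedPart adj C S x A B) (hA : A ≤ A') (hB : B ≤ B') : GatedPart adj C S x A' B' where
  inNbhd_subset := h.inNbhd_subset
  repair := h.repair.mono le_rfl hA
  stabilize := h.stabilize.mono le_rfl hB

end GatedPart

/-- The simple directed cycle `c 0 → ⋯ → c ℓ → c 0` meets `S` exactly in `c (e + 1)`, whose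
predecessors outside `S` reduce to `c e`. The only other node of the cycle that may have
predecessors outside the cycle is its root `c 0`, and these lie outside `S`. -/
structure AttachedCycle (adj : V → V → Prop) (S : Set V) (c : ℕ → V) (e ℓ : ℕ) : Prop where
  lt : e < ℓ
  injOn : Set.InjOn c (Set.Iic ℓ)
  mem_iff : ∀ i ≤ ℓ, c i ∈ S ↔ i = e + 1
  adj_succ : ∀ i < ℓ, adj (c i) (c (i + 1))
  adj_last : adj (c ℓ) (c 0)
  eq_of_adj_succ : ∀ i < ℓ, i ≠ e → ∀ u, adj u (c (i + 1)) → u = c i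
  eq_or_mem_of_adj : ∀ u, adj u (c (e + 1)) → u = c e ∨ u ∈ S
  eq_or_notMem_of_adj : ∀ u, adj u (c 0) → u = c ℓ ∨ u ∉ S ∪ c '' Set.Iic ℓ

variable {adj : V → V → Prop} {C : V → Finset M} {S : Set V} {c : ℕ → V} {e ℓ A B : ℕ}
  {s t : V → M}

namespace AttachedCycle

theorem isArc_incoming (h : AttachedCycle adj S c e ℓ) : IsArc adj c 0 e where
  injOn := h.injOn.mono fun _ hi => hi.2.trans h.lt.le
  eq_of_adj i _ hi := h.eq_of_adj_succ i (hi.trans h.lt) hi.ne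

theorem isArc_outgoing (h : AttachedCycle adj S c e ℓ) : IsArc adj c (e + 1) ℓ where
  injOn := h.injOn.mono fun _ hi => hi.2
  eq_of_adj i hi hi' := h.eq_of_adj_succ i hi' (by omega)

theorem disjoint_image (h : AttachedCycle adj S c e ℓ) {I : Set ℕ} (hI : I ⊆ Set.Iic ℓ)
    (he : e + 1 ∉ I) : Disjoint S (c '' I) := by
  rw [Set.disjoint_right]
  rintro _ ⟨i, hi, rfl⟩ hS
  exact he ((h.mem_iff i (hI hi)).1 hS ▸ hi)

theorem disjoint_incoming (h : AttachedCycle adj S c e ℓ) : Disjoint S (c '' Set.Icc 0 e) :=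
  h.disjoint_image (fun _ hi => hi.2.trans h.lt.le) (by simp)

theorem disjoint_outgoing (h : AttachedCycle adj S c e ℓ) :
    Disjoint S (c '' Set.Ioc (e + 1) ℓ) :=
  h.disjoint_image (fun _ hi => hi.2) (by simp)

theorem disjoint_arcs (h : AttachedCycle adj S c e ℓ) :
    Disjoint (c '' Set.Icc 0 e) (c '' Set.Icc (e + 1) ℓ) :=
  Disjoint.image (Set.disjoint_left.2 fun i hi hi' => by grind) h.injOn
    (fun _ hi => hi.2.trans h.lt.le) fun _ hi => hi.2

theorem disjoint_incoming_outgoing (h : AttachedCycle adj S c e ℓ) :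
    Disjoint (c '' Set.Icc 0 e) (c '' Set.Ioc (e + 1) ℓ) :=
  h.disjoint_arcs.mono_right (Set.image_mono Set.Ioc_subset_Icc_self)

theorem incoming_subset (h : AttachedCycle adj S c e ℓ) :
    c '' Set.Icc 0 e ⊆ S ∪ c '' Set.Iic ℓ :=
  fun _ hv => .inr (Set.image_mono (fun _ hi => hi.2.trans h.lt.le) hv)

theorem gate_mem (h : AttachedCycle adj S c e ℓ) : c (e + 1) ∈ S :=
  (h.mem_iff (e + 1) h.lt).2 rfl

theorem root_notMem (h : AttachedCycle adj S c e ℓ) : c 0 ∉ S :=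
  fun h0 => absurd ((h.mem_iff 0 (Nat.zero_le ℓ)).1 h0) (Nat.succ_ne_zero e).symm

theorem root_ne (h : AttachedCycle adj S c e ℓ) {i : ℕ} (hi : i ≤ ℓ) (h0 : i ≠ 0) : c i ≠ c 0 :=
  fun heq => h0 (h.injOn hi (Nat.zero_le ℓ) heq)

theorem diff_root_eq (h : AttachedCycle adj S c e ℓ) :
    (S ∪ c '' Set.Iic ℓ) \ {c 0} = c '' Set.Ioc 0 e ∪ S ∪ c '' Set.Ioc (e + 1) ℓ := by
  have hlt := h.lt
  ext v
  constructor
  · rintro ⟨hv | ⟨i, hi, rfl⟩, hv0⟩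
    · exact .inl (.inr hv)
    · have hi0 : i ≠ 0 := by rintro rfl; exact hv0 rfl
      rcases lt_trichotomy i (e + 1) with hie | rfl | hie
      · exact .inl (.inl ⟨i, by grind, rfl⟩)
      · exact .inl (.inr h.gate_mem)
      · exact .inr ⟨i, ⟨hie, hi⟩, rfl⟩
  · rintro ((⟨i, hi, rfl⟩ | hv) | ⟨i, hi, rfl⟩)
    · exact ⟨.inr ⟨i, by grind, rfl⟩, h.root_ne (by grind) (by grind)⟩
    · exact ⟨.inl hv, fun hv0 => h.root_notMem (hv0 ▸ hv)⟩
    · exact ⟨.inr ⟨i, by grind, rfl⟩, h.root_ne (by grind) (by grind)⟩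

theorem subset_diff_root (h : AttachedCycle adj S c e ℓ) :
    S ⊆ (S ∪ c '' Set.Iic ℓ) \ {c 0} :=
  fun _ hv => ⟨.inl hv, fun hv0 => h.root_notMem (hv0 ▸ hv)⟩

theorem inNbhd_part_subset (h : AttachedCycle adj S c e ℓ)
    (hS : inNbhd adj (S \ {c (e + 1)}) ⊆ S) : inNbhd adj S ⊆ insert (c e) S := by
  rintro v (hv | ⟨w, hw, hvw⟩)
  · exact .inr hv
  · by_cases hwx : w = c (e + 1)
    · exact h.eq_or_mem_of_adj v (hwx ▸ hvw)
    · exact .inr (hS (.inr ⟨w, ⟨hw, hwx⟩, hvw⟩))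

theorem inNbhd_diff_root_subset (h : AttachedCycle adj S c e ℓ)
    (hS : inNbhd adj (S \ {c (e + 1)}) ⊆ S) :
    inNbhd adj ((S ∪ c '' Set.Iic ℓ) \ {c 0}) ⊆ S ∪ c '' Set.Iic ℓ := by
  have hlt := h.lt
  have hin := h.isArc_incoming.inNbhd_subset
  have hout := h.isArc_outgoing.inNbhd_subset
  have hpart := h.inNbhd_part_subset hS
  have hcycle {p q : ℕ} (hq : q ≤ ℓ) : c '' Set.Icc p q ⊆ S ∪ c '' Set.Iic ℓ :=
    fun _ hv => .inr (Set.image_mono (fun _ hi => hi.2.trans hq) hv)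
  rw [h.diff_root_eq, inNbhd_union, inNbhd_union]
  refine Set.union_subset (Set.union_subset (hin.trans (hcycle hlt.le)) (hpart.trans ?_))
    (hout.trans (hcycle le_rfl))
  exact Set.insert_subset (.inr ⟨e, hlt.le, rfl⟩) Set.subset_union_left

theorem exists_stableOn_diff_root (h : AttachedCycle adj S c e ℓ)
    (hS : GatedPart adj C S (c (e + 1)) A B) (hs : StableOn adj C s (S \ {c (e + 1)})) :
    ∃ s', ReachesWithin adj C (A + ℓ) s s' ∧
      Set.EqOn s' s ((S ∪ c '' Set.Iic ℓ) \ {c 0})ᶜ ∧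
      StableOn adj C s' ((S ∪ c '' Set.Iic ℓ) \ {c 0}) ∧
      (StableOn adj C s (c '' Set.Ioc (e + 1) ℓ) →
        s' (c ℓ) = s' (c (e + 1)) ∨ s' (c ℓ) = s (c ℓ)) := by
  have hlt := h.lt
  have hSIn := h.disjoint_incoming
  have hSOut := h.disjoint_outgoing
  have hInOut := h.disjoint_incoming_outgoing
  obtain ⟨s₁, hr₁, heq₁, hst₁, -⟩ := h.isArc_incoming.exists_sweep (C := C) (Nat.zero_le e) s
  have heq₁' : Set.EqOn s₁ s (c '' Set.Icc 0 e)ᶜ :=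
    heq₁.mono (Set.compl_subset_compl.2 (Set.image_mono Set.Ioc_subset_Icc_self))
  obtain ⟨s₂, hr₂, heq₂, hst₂⟩ :=
    hS.repair s₁ (hs.congr (heq₁'.mono (hS.inNbhd_subset.trans hSIn.subset_compl_right)))
  obtain ⟨s₃, hr₃, heq₃, hst₃, hend⟩ := h.isArc_outgoing.exists_sweep (C := C) hlt s₂
  refine ⟨s₃, ((hr₁.trans hr₂).trans hr₃).mono (by omega), ?_, ?_, fun hout => ?_⟩
  · rw [h.diff_root_eq]
    exact fun v hv => (heq₃ (by grind)).trans ((heq₂ (by grind)).trans (heq₁ (by grind)))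
  · have hIn₃ : Set.EqOn s₃ s₁ (c '' Set.Icc 0 e) :=
      (heq₃.mono hInOut.subset_compl_right).trans (heq₂.mono hSIn.subset_compl_left)
    have hS₃ : Set.EqOn s₃ s₂ (insert (c e) S) :=
      heq₃.mono (Set.insert_subset (Set.disjoint_left.1 hInOut ⟨e, by simp, rfl⟩)
        hSOut.subset_compl_right)
    rw [h.diff_root_eq]
    exact ((hst₁.congr (hIn₃.mono h.isArc_incoming.inNbhd_subset)).union
      (hst₂.congr (hS₃.mono (h.inNbhd_part_subset hS.inNbhd_subset)))).union hst₃
  · have hOut₂ : Set.EqOn s₂ s (c '' Set.Ioc (e + 1) ℓ) :=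
      (heq₂.mono hSOut.subset_compl_left).trans (heq₁'.mono hInOut.subset_compl_left)
    have hout₂ : StableOn adj C s₂ (c '' Set.Ioc (e + 2) ℓ) :=
      (hout.mono (Set.image_mono (Set.Ioc_subset_Ioc_left (e + 1).le_succ))).congr
        (hOut₂.mono (h.isArc_outgoing.mono (e + 1).le_succ le_rfl).inNbhd_subset)
    rcases hend hout₂ with hgate | ⟨hlt', hkeep⟩
    · exact .inl (hgate.trans (heq₃ (Set.disjoint_left.1 hSOut h.gate_mem)).symm)
    · exact .inr (hkeep.trans (hOut₂ ⟨ℓ, ⟨hlt', le_rfl⟩, rfl⟩))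

theorem stableOn_part_of_eqOn (h : AttachedCycle adj S c e ℓ)
    (hS : inNbhd adj (S \ {c (e + 1)}) ⊆ S)
    (hs : StableOn adj C s ((S ∪ c '' Set.Iic ℓ) \ {c 0}))
    (heq : Set.EqOn t s (c '' Set.Icc 0 e)ᶜ) : StableOn adj C t (S \ {c (e + 1)}) :=
  (hs.mono (Set.sdiff_subset.trans h.subset_diff_root)).congr
    (heq.mono (hS.trans h.disjoint_incoming.subset_compl_right))

theorem stableOn_outgoing_of_eqOn (h : AttachedCycle adj S c e ℓ)
    (hs : StableOn adj C s ((S ∪ c '' Set.Iic ℓ) \ {c 0}))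
    (heq : Set.EqOn t s (c '' Set.Icc 0 e)ᶜ) : StableOn adj C t (c '' Set.Ioc (e + 1) ℓ) :=
  (hs.mono (h.diff_root_eq ▸ Set.subset_union_right)).congr
    (heq.mono (h.isArc_outgoing.inNbhd_subset.trans h.disjoint_arcs.subset_compl_left))

theorem stableAt_gate_of_eqOn (h : AttachedCycle adj S c e ℓ)
    (hs : StableAt adj C s (c (e + 1))) (heq : Set.EqOn t s (c '' Set.Icc 0 e)ᶜ)
    (hend : t (c e) = s (c (e + 1)) ∨ t (c e) = s (c e)) : StableAt adj C t (c (e + 1)) := by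
  have hS : Set.EqOn t s S := heq.mono h.disjoint_incoming.subset_compl_right
  rcases hend with hpassed | hkeep
  · exact .inl ⟨c e, h.adj_succ e h.lt, hpassed.trans (hS h.gate_mem).symm⟩
  have hst : StableOn adj C s {c (e + 1)} := by
    rintro _ rfl
    exact hs
  refine hst.congr ?_ _ rfl
  rintro v (rfl | ⟨_, rfl, hv⟩)
  · exact hS h.gate_mem
  · rcases h.eq_or_mem_of_adj v hv with rfl | hvS
    exacts [hkeep, hS hvS]

-- Predecessors outside the new part are preferred because they do not move.
theorem exists_adj_root (h : AttachedCycle adj S c e ℓ) (hroot : ¬ StableAt adj C s (c 0)) :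
    ∃ u, adj u (c 0) ∧ s u ∈ C (c 0) ∧
      (u ∉ S ∪ c '' Set.Iic ℓ ∨
        u = c ℓ ∧ ∀ w ∉ S ∪ c '' Set.Iic ℓ, adj w (c 0) → s w ∉ C (c 0)) := by
  obtain ⟨-, u, hu, huC⟩ := not_stableAt_iff.1 hroot
  by_cases hout : ∃ w ∉ S ∪ c '' Set.Iic ℓ, adj w (c 0) ∧ s w ∈ C (c 0)
  · obtain ⟨w, hw, hadj, hwC⟩ := hout
    exact ⟨w, hadj, hwC, .inl hw⟩
  · push Not at hout
    exact ⟨u, hu, huC, (h.eq_or_notMem_of_adj u hu).elim (fun heq => .inr ⟨heq, hout⟩)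
      fun hnot => absurd huC (hout u hnot hu)⟩

-- If the root follows a predecessor outside the new part, it stays stable. Otherwise it can only
-- follow `c ℓ`, which changes only by adopting the colour of the gate.
theorem exists_root_stable_or_gate_colour (h : AttachedCycle adj S c e ℓ)
    (hS : GatedPart adj C S (c (e + 1)) A B)
    (hs : StableOn adj C s ((S ∪ c '' Set.Iic ℓ) \ {c 0})) (hroot : ¬ StableAt adj C s (c 0)) :
    ∃ s', ReachesWithin adj C (1 + (A + ℓ)) s s' ∧ Set.EqOn s' s (S ∪ c '' Set.Iic ℓ)ᶜ ∧
      StableOn adj C s' ((S ∪ c '' Set.Iic ℓ) \ {c 0}) ∧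
      (StableAt adj C s' (c 0) ∨ s' (c ℓ) = s' (c (e + 1)) ∧ s' (c ℓ) ∈ C (c 0)) := by
  obtain ⟨u, hu, huC, hchoice⟩ := h.exists_adj_root hroot
  set s₁ := Function.update s (c 0) (s u)
  have heq₁ : Set.EqOn s₁ s {c 0}ᶜ := eqOn_update s (c 0) (s u)
  have heq₁' : Set.EqOn s₁ s (c '' Set.Icc 0 e)ᶜ :=
    heq₁.mono (Set.compl_subset_compl.2 (Set.singleton_subset_iff.2 ⟨0, by simp, rfl⟩))
  obtain ⟨s₂, hr₂, heq₂, hst₂, hend⟩ :=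
    h.exists_stableOn_diff_root hS (h.stableOn_part_of_eqOn hS.inNbhd_subset hs heq₁')
  have heq₂out : Set.EqOn s₂ s (S ∪ c '' Set.Iic ℓ)ᶜ := fun v hv =>
    (heq₂ fun hv' => hv hv'.1).trans (heq₁ fun hv0 => hv (hv0 ▸ .inr ⟨0, Nat.zero_le ℓ, rfl⟩))
  have hroot₂ : s₂ (c 0) = s u :=
    (heq₂ fun h0 => h0.2 rfl).trans (Function.update_self ..)
  refine ⟨s₂, (ReachesWithin.single ⟨u, c 0, hu, huC, hroot, rfl⟩).trans hr₂, heq₂out, hst₂, ?_⟩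
  rcases hchoice with hu_out | ⟨rfl, hout⟩
  · exact .inl (.inl ⟨u, hu, (heq₂out hu_out).trans hroot₂.symm⟩)
  by_cases hst : StableAt adj C s₂ (c 0)
  · exact .inl hst
  obtain ⟨hmis, w, hw, hwC⟩ := not_stableAt_iff.1 hst
  obtain rfl : w = c ℓ := (h.eq_or_notMem_of_adj w hw).resolve_right fun hw' =>
    hout w hw' hw (heq₂out hw' ▸ hwC)
  have hchanged : s₂ (c ℓ) ≠ s₁ (c ℓ) := fun hkeep =>
    hmis _ hw (by rw [hkeep, heq₁ (ne_of_not_stableAt hu hroot), hroot₂])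
  exact .inr ⟨(hend (h.stableOn_outgoing_of_eqOn hs heq₁')).resolve_right hchanged, hwC⟩

-- If the incoming arc passes the new colour of the root on to the gate, the gate stays stable,
-- because it already has that colour.
theorem exists_stableOn_of_gate_colour (h : AttachedCycle adj S c e ℓ)
    (hS : inNbhd adj (S \ {c (e + 1)}) ⊆ S)
    (hs : StableOn adj C s ((S ∪ c '' Set.Iic ℓ) \ {c 0})) (hroot : ¬ StableAt adj C s (c 0))
    (hgate : s (c ℓ) = s (c (e + 1))) (havail : s (c ℓ) ∈ C (c 0)) :
    ∃ s', ReachesWithin adj C (1 + e) s s' ∧ Set.EqOn s' s (S ∪ c '' Set.Iic ℓ)ᶜ ∧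
      StableOn adj C s' (S ∪ c '' Set.Iic ℓ) := by
  have hlt := h.lt
  set s₁ := Function.update s (c 0) (s (c ℓ))
  have heq₁ : Set.EqOn s₁ s {c 0}ᶜ := eqOn_update s (c 0) _
  have hroot₁ : s₁ (c 0) = s (c ℓ) := Function.update_self ..
  have hin₁ : StableOn adj C s₁ (c '' Set.Ioc 1 e) := by
    refine (hs.mono ?_).congr (heq₁.mono ?_)
    · rw [h.diff_root_eq]
      exact fun v hv => .inl (.inl (Set.image_mono (Set.Ioc_subset_Ioc_left zero_le_one) hv))
    · refine (h.isArc_incoming.mono zero_le_one le_rfl).inNbhd_subset.trans ?_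
      rintro _ ⟨i, hi, rfl⟩
      exact h.root_ne (by grind) (by grind)
  obtain ⟨s₂, hr₂, heq₂, hst₂, hend⟩ := h.isArc_incoming.exists_sweep (C := C) (Nat.zero_le e) s₁
  have heq : Set.EqOn s₂ s (c '' Set.Icc 0 e)ᶜ :=
    (heq₂.mono (Set.compl_subset_compl.2 (Set.image_mono Set.Ioc_subset_Icc_self))).trans
      (heq₁.mono (Set.compl_subset_compl.2 (Set.singleton_subset_iff.2 ⟨0, by simp, rfl⟩)))
  have hend₂ : s₂ (c e) = s (c (e + 1)) ∨ s₂ (c e) = s (c e) :=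
    (hend hin₁).imp (fun hpassed => hpassed.trans (hroot₁.trans hgate))
      fun ⟨he, hkeep⟩ => hkeep.trans (heq₁ (h.root_ne hlt.le he.ne'))
  have hgate₂ : StableAt adj C s₂ (c (e + 1)) :=
    h.stableAt_gate_of_eqOn (hs _ (h.subset_diff_root h.gate_mem)) heq hend₂
  have hroot₂ : StableAt adj C s₂ (c 0) := by
    refine .inl ⟨c ℓ, h.adj_last, ?_⟩
    rw [heq (Set.disjoint_right.1 h.disjoint_arcs ⟨ℓ, ⟨hlt, le_rfl⟩, rfl⟩), heq₂ ?_, hroot₁]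
    rintro ⟨i, hi, hi0⟩
    exact h.root_ne (by grind) (by grind) hi0
  refine ⟨s₂, (ReachesWithin.single ⟨c ℓ, c 0, h.adj_last, havail, hroot, rfl⟩).trans hr₂,
    heq.mono (Set.compl_subset_compl.2 h.incoming_subset), .of_diff_singleton ?_ hroot₂⟩
  rw [h.diff_root_eq]
  exact (hst₂.union ((h.stableOn_part_of_eqOn hS hs heq).of_diff_singleton hgate₂)).union
    (h.stableOn_outgoing_of_eqOn hs heq)

theorem repair (h : AttachedCycle adj S c e ℓ) (hS : GatedPart adj C S (c (e + 1)) A B) :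
    Stabilizable adj C ((S ∪ c '' Set.Iic ℓ) \ {c 0}) (S ∪ c '' Set.Iic ℓ)
      (A + 2 * ℓ + 1) := by
  intro s hs
  have hlt := h.lt
  by_cases hroot : StableAt adj C s (c 0)
  · exact ⟨s, .refl _ s, Set.eqOn_refl s _, hs.of_diff_singleton hroot⟩
  obtain ⟨s₁, hr₁, heq₁, hst₁, hroot₁⟩ := h.exists_root_stable_or_gate_colour hS hs hroot
  by_cases hst : StableAt adj C s₁ (c 0)
  · exact ⟨s₁, hr₁.mono (by omega), heq₁, hst₁.of_diff_singleton hst⟩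
  obtain ⟨hgate, havail⟩ := hroot₁.resolve_left hst
  obtain ⟨s₂, hr₂, heq₂, hst₂⟩ :=
    h.exists_stableOn_of_gate_colour hS.inNbhd_subset hst₁ hst hgate havail
  exact ⟨s₂, (hr₁.trans hr₂).mono (by omega), heq₂.trans heq₁, hst₂⟩

theorem stabilize (h : AttachedCycle adj S c e ℓ) (hS : GatedPart adj C S (c (e + 1)) A B) :
    Stabilizable adj C ∅ (S ∪ c '' Set.Iic ℓ) (B + (A + ℓ) + (A + 2 * ℓ + 1)) := by
  have hextend : Stabilizable adj C (S \ {c (e + 1)}) ((S ∪ c '' Set.Iic ℓ) \ {c 0}) (A + ℓ) := by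
    intro s hs
    obtain ⟨s', hr, heq, hst, -⟩ := h.exists_stableOn_diff_root hS hs
    exact ⟨s', hr, heq, hst⟩
  have hdiff := hS.stabilize.trans (hextend.mono Set.sdiff_subset le_rfl) h.subset_diff_root
  exact hdiff.trans (h.repair hS) Set.sdiff_subset

theorem gatedPart (h : AttachedCycle adj S c e ℓ) (hS : GatedPart adj C S (c (e + 1)) A B) :
    GatedPart adj C (S ∪ c '' Set.Iic ℓ) (c 0) (A + 2 * ℓ + 1)
      (B + (A + ℓ) + (A + 2 * ℓ + 1)) where
  inNbhd_subset := h.inNbhd_diff_root_subset hS.inNbhd_subset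
  repair := h.repair hS
  stabilize := h.stabilize hS

end AttachedCycle

end AttachedCycles

section CoordinationGames

variable {V M : Type} {adj : V → V → Prop} {C : V → Finset M} {s t : V → M}

theorem CopyStep.valid (h : CopyStep adj C s t) (hs : Valid C s) : Valid C t := by
  obtain ⟨u, v, -, huC, -, rfl⟩ := h
  exact (Function.forall_update_iff s fun i a => a ∈ C i).2 ⟨huC, fun i _ => hs i⟩

variable [Fintype V]

theorem payoff_eq_card (adj : V → V → Prop) (s : V → M) (i : V) :
    payoff adj (fun _ _ => 1) (fun _ _ => 0) s i =
      (Finset.univ.filter fun j => adj j i ∧ s j = s i).card := by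
  simp [payoff]

theorem CopyStep.uniDev (h : CopyStep adj C s t) (hs : Valid C s) :
    UniDev adj (fun _ _ => 1) (fun _ _ => 0) C s t := by
  have ht := h.valid hs
  obtain ⟨u, v, hu, -, hv, rfl⟩ := h
  have hdiff := (not_stableAt_iff.1 hv).1
  have hfix := eqOn_update s v (s u)
  refine ⟨⟨ht, fun heq => hdiff u hu ?_, fun i hi => ?_⟩, v, fun j hj => (hfix hj).symm⟩
  · rw [heq, Function.update_self, Function.update_of_ne (ne_of_not_stableAt hu hv)]
  · obtain rfl : i = v := by_contra fun hiv => hi (hfix hiv).symm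
    have hnone : (Finset.univ.filter fun j => adj j i ∧ s j = s i) = ∅ :=
      Finset.filter_eq_empty_iff.2 fun j _ hj => hdiff j hj.1 hj.2
    rw [payoff_eq_card, payoff_eq_card, hnone, Finset.card_empty, Nat.cast_lt, Finset.card_pos]
    exact ⟨u, by simp [hu, hfix (ne_of_not_stableAt hu hv)]⟩

theorem isNash_of_forall_stableAt (hs : Valid C s) (hst : ∀ v, StableAt adj C s v)
    (hirr : ∀ v, ¬ adj v v) (hdeg : ∀ v, (Finset.univ.filter (adj · v)).card ≤ 2) :
    IsNash adj (fun _ _ => 1) (fun _ _ => 0) C s := by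
  refine ⟨hs, ?_⟩
  rintro s' ⟨⟨hs', hne, hgain⟩, v, hfix⟩
  have hv : s v ≠ s' v := fun hv => hne (funext fun j => by
    by_cases hj : j = v
    exacts [hj ▸ hv, hfix j hj])
  have hpred : ∀ u, adj u v → s u = s' u := fun u hu => hfix u fun huv => hirr v (huv ▸ hu)
  have hlt := hgain v hv
  rw [payoff_eq_card, payoff_eq_card, Nat.cast_lt] at hlt
  rcases hst v with ⟨w, hw, hwv⟩ | hnone
  · have hold : 0 < (Finset.univ.filter fun j => adj j v ∧ s j = s v).card :=
      Finset.card_pos.2 ⟨w, by simp [hw, hwv]⟩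
    have hnew : (Finset.univ.filter fun j => adj j v ∧ s' j = s' v) ⊂
        Finset.univ.filter (adj · v) := by
      refine (Finset.ssubset_iff_of_subset (Finset.monotone_filter_right _ fun _ _ => And.left)).2
        ⟨w, by simp [hw], ?_⟩
      simp [hw, ← hpred w hw, hwv, hv]
    have := Finset.card_lt_card hnew
    have := hdeg v
    omega
  · obtain ⟨u, hu⟩ := Finset.card_pos.1 (Nat.zero_lt_of_lt hlt)
    obtain ⟨hu, huv⟩ := (Finset.mem_filter.1 hu).2
    exact hnone u hu (hpred u hu ▸ huv ▸ hs' v)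

theorem ReachesWithin.exists_impPath {B : ℕ} (h : ReachesWithin adj C B s t) (hs : Valid C s)
    (hnash : Valid C t → IsNash adj (fun _ _ => 1) (fun _ _ => 0) C t) :
    ∃ L ≤ B, ImpPath adj (fun _ _ => 1) (fun _ _ => 0) C s L := by
  induction h with
  | refl B s =>
    exact ⟨0, Nat.zero_le B, fun _ => s, rfl, fun t ht => absurd ht (Nat.not_lt_zero t), hnash hs⟩
  | @head B s₀ s₁ t hstep _ ih =>
    obtain ⟨L, hL, σ, rfl, hσ, hend⟩ := ih (hstep.valid hs) hnash
    refine ⟨L + 1, by omega, fun i => Nat.casesOn i s₀ σ, rfl, ?_, hend⟩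
    rintro (_ | i) hi
    exacts [hstep.uniDev hs, hσ i (by omega)]

end CoordinationGames

section OpenChains

variable {V : Type} {m ℓ : ℕ} {node : ℕ → ℕ → V} {k : ℕ → ℕ} {j i : ℕ} {u : V}

/-- The nodes of the cycles `0, …, j` of a chain whose cycles have `ℓ + 1` nodes each. -/
def initialCycles (node : ℕ → ℕ → V) (ℓ j : ℕ) : Set V :=
  Set.accumulate (fun j => node j '' Set.Iic ℓ) j

theorem initialCycles_succ (node : ℕ → ℕ → V) (ℓ j : ℕ) :
    initialCycles node ℓ (j + 1) = initialCycles node ℓ j ∪ node (j + 1) '' Set.Iic ℓ :=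
  Set.accumulate_succ _ j

theorem mem_initialCycles {v : V} :
    v ∈ initialCycles node ℓ j ↔ ∃ j' ≤ j, ∃ i ≤ ℓ, node j' i = v :=
  Set.mem_accumulate

theorem chainAdj_succ_iff {v : V} :
    chainAdj m (ℓ + 1) node u v ↔
      ∃ j < m, (∃ i < ℓ, u = node j i ∧ v = node j (i + 1)) ∨ u = node j ℓ ∧ v = node j 0 := by
  constructor
  · rintro ⟨j, i, hj, hi, rfl, rfl⟩
    refine ⟨j, hj, ?_⟩
    rcases Nat.lt_succ_iff_lt_or_eq.1 hi with hi | rfl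
    · exact .inl ⟨i, hi, rfl, by rw [Nat.mod_eq_of_lt (Nat.succ_lt_succ hi)]⟩
    · exact .inr ⟨rfl, by rw [Nat.mod_self]⟩
  · rintro ⟨j, hj, ⟨i, hi, rfl, rfl⟩ | ⟨rfl, rfl⟩⟩
    · exact ⟨j, i, hj, hi.trans ℓ.lt_succ_self, rfl, by rw [Nat.mod_eq_of_lt (Nat.succ_lt_succ hi)]⟩
    · exact ⟨j, ℓ, hj, ℓ.lt_succ_self, rfl, by rw [Nat.mod_self]⟩

namespace IsOpenChain

theorem injOn_node (h : IsOpenChain m (ℓ + 1) node k) (hj : j < m) :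
    Set.InjOn (node j) (Set.Iic ℓ) := by
  intro i hi i' hi' heq
  have := h.2.2.2.2.1 j i j i' hj (Nat.lt_succ_of_le hi) hj (Nat.lt_succ_of_le hi') heq
  omega

theorem node_mem_initialCycles_iff (h : IsOpenChain m (ℓ + 1) node k) (hj : j + 1 < m)
    (hi : i ≤ ℓ) : node (j + 1) i ∈ initialCycles node ℓ j ↔ i = k j := by
  obtain ⟨-, -, -, hshare, hdisj, -⟩ := h
  rw [mem_initialCycles]
  constructor
  · rintro ⟨j', hj', i', hi', heq⟩
    have := hdisj j' i' (j + 1) i (by omega) (by omega) hj (by omega) heq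
    grind
  · rintro rfl
    exact ⟨j, le_rfl, 0, Nat.zero_le ℓ, hshare j hj⟩

theorem initialCycles_eq_univ (h : IsOpenChain m (ℓ + 1) node k) :
    initialCycles node ℓ (m - 1) = Set.univ := by
  refine Set.eq_univ_of_forall fun v => mem_initialCycles.2 ?_
  obtain ⟨j, i, hj, hi, rfl⟩ := h.2.2.2.2.2 v
  exact ⟨j, by omega, i, by omega, rfl⟩

theorem eq_of_adj_root (h : IsOpenChain m (ℓ + 1) node k) (hj : j < m)
    (hu : chainAdj m (ℓ + 1) node u (node j 0)) :
    u = node j ℓ ∨ j + 1 < m ∧ u = node (j + 1) (k j - 1) := by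
  obtain ⟨-, hn, hk, -, hdisj, -⟩ := h
  obtain ⟨j', hj', ⟨i, hi, rfl, heq⟩ | ⟨rfl, heq⟩⟩ := chainAdj_succ_iff.1 hu
  · rcases hdisj j 0 j' (i + 1) hj (by omega) hj' (by omega) heq with h' | ⟨rfl, -, h'⟩ | h'
    · omega
    · exact .inr ⟨hj', by rw [← h']; rfl⟩
    · omega
  · rcases hdisj j 0 j' 0 hj (by omega) hj' (by omega) heq with
      ⟨rfl, -⟩ | ⟨rfl, -, h'⟩ | ⟨rfl, -, h'⟩
    · exact .inl rfl
    · have := hk j hj'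
      omega
    · have := hk j' hj
      omega

theorem eq_of_adj_succ (h : IsOpenChain m (ℓ + 1) node k) (hj : j < m) (hi : i < ℓ)
    (hu : chainAdj m (ℓ + 1) node u (node j (i + 1))) :
    u = node j i ∨ ∃ j', j = j' + 1 ∧ i + 1 = k j' ∧ u = node j' ℓ := by
  obtain ⟨-, -, -, -, hdisj, -⟩ := h
  obtain ⟨j', hj', ⟨i', hi', rfl, heq⟩ | ⟨rfl, heq⟩⟩ := chainAdj_succ_iff.1 hu
  · rcases hdisj j (i + 1) j' (i' + 1) hj (by omega) hj' (by omega) heq with ⟨rfl, h'⟩ | h' | h'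
    · obtain rfl : i = i' := by omega
      exact .inl rfl
    · omega
    · omega
  · rcases hdisj j (i + 1) j' 0 hj (by omega) hj' (by omega) heq with h' | h' | ⟨rfl, -, h'⟩
    · omega
    · omega
    · exact .inr ⟨j', rfl, h', rfl⟩

theorem not_adj_self (h : IsOpenChain m (ℓ + 1) node k) (v : V) :
    ¬ chainAdj m (ℓ + 1) node v v := by
  have hℓ : 2 ≤ ℓ := Nat.le_of_succ_le_succ h.2.1
  intro hv
  obtain ⟨j, hj, ⟨i, hi, rfl, heq⟩ | ⟨rfl, heq⟩⟩ := chainAdj_succ_iff.1 hv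
  · exact absurd (h.injOn_node hj hi.le hi heq) (by omega)
  · exact absurd (h.injOn_node hj (Set.mem_Iic.2 le_rfl) (Nat.zero_le ℓ) heq) (by omega)

theorem card_pred_le_two [Fintype V] (h : IsOpenChain m (ℓ + 1) node k) (v : V) :
    (Finset.univ.filter (chainAdj m (ℓ + 1) node · v)).card ≤ 2 := by
  obtain ⟨j, i, hj, hi, rfl⟩ := h.2.2.2.2.2 v
  suffices ∃ a b, ∀ u, chainAdj m (ℓ + 1) node u (node j i) → u = a ∨ u = b by
    obtain ⟨a, b, hab⟩ := this
    refine (Finset.card_le_card fun u hu => ?_).trans (Finset.card_le_two (a := a) (b := b))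
    simpa using hab u (Finset.mem_filter.1 hu).2
  rcases i with _ | i
  · exact ⟨_, _, fun u hu => (h.eq_of_adj_root hj hu).imp_right And.right⟩
  · refine ⟨node j i, node (j - 1) ℓ, fun u hu => ?_⟩
    refine (h.eq_of_adj_succ hj (Nat.lt_of_succ_lt_succ hi) hu).imp_right ?_
    rintro ⟨j', rfl, -, hu⟩
    exact hu

theorem eq_or_notMem_of_adj_root (h : IsOpenChain m (ℓ + 1) node k) (hj : j < m)
    (hu : chainAdj m (ℓ + 1) node u (node j 0)) :
    u = node j ℓ ∨ u ∉ initialCycles node ℓ j := by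
  refine (h.eq_of_adj_root hj hu).imp_right ?_
  rintro ⟨hj', rfl⟩
  have := h.2.2.1 j hj'
  rw [h.node_mem_initialCycles_iff hj' (by omega)]
  omega

theorem singleton_union_image (h : IsOpenChain m (ℓ + 1) node k) :
    {node 0 1} ∪ node 0 '' Set.Iic ℓ = initialCycles node ℓ 0 := by
  have hℓ : 2 ≤ ℓ := Nat.le_of_succ_le_succ h.2.1
  rw [initialCycles, Set.accumulate_zero_nat, Set.union_eq_right, Set.singleton_subset_iff]
  exact ⟨1, one_le_two.trans hℓ, rfl⟩

theorem attachedCycle_zero (h : IsOpenChain m (ℓ + 1) node k) :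
    AttachedCycle (chainAdj m (ℓ + 1) node) {node 0 1} (node 0) 0 ℓ := by
  have hm : 0 < m := two_pos.trans_le h.1
  have hℓ : 2 ≤ ℓ := Nat.le_of_succ_le_succ h.2.1
  have hinj := h.injOn_node hm
  have hpred {i : ℕ} (hi : i < ℓ) {u : V} (hu : chainAdj m (ℓ + 1) node u (node 0 (i + 1))) :
      u = node 0 i := by
    refine (h.eq_of_adj_succ hm hi hu).resolve_right ?_
    rintro ⟨j', hj', -⟩
    omega
  exact
    { lt := by omega
      injOn := hinj
      mem_iff := fun i hi => hinj.eq_iff hi (one_le_two.trans hℓ)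
      adj_succ := fun i hi => chainAdj_succ_iff.2 ⟨0, hm, .inl ⟨i, hi, rfl, rfl⟩⟩
      adj_last := chainAdj_succ_iff.2 ⟨0, hm, .inr ⟨rfl, rfl⟩⟩
      eq_of_adj_succ := fun i hi _ u hu => hpred hi hu
      eq_or_mem_of_adj := fun u hu => .inl (hpred (by omega) hu)
      eq_or_notMem_of_adj := fun u hu =>
        h.singleton_union_image ▸ h.eq_or_notMem_of_adj_root hm hu }

theorem attachedCycle_succ (h : IsOpenChain m (ℓ + 1) node k) (hj : j + 1 < m) :
    AttachedCycle (chainAdj m (ℓ + 1) node) (initialCycles node ℓ j) (node (j + 1)) (k j - 1)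
      ℓ := by
  have hk := h.2.2.1 j hj
  have hgate : k j - 1 + 1 = k j := by omega
  refine
    { lt := by omega
      injOn := h.injOn_node hj
      mem_iff := fun i hi => hgate ▸ h.node_mem_initialCycles_iff hj hi
      adj_succ := fun i hi => chainAdj_succ_iff.2 ⟨j + 1, hj, .inl ⟨i, hi, rfl, rfl⟩⟩
      adj_last := chainAdj_succ_iff.2 ⟨j + 1, hj, .inr ⟨rfl, rfl⟩⟩
      eq_of_adj_succ := fun i hi hie u hu => (h.eq_of_adj_succ hj hi hu).resolve_right ?_
      eq_or_mem_of_adj := fun u hu => (h.eq_of_adj_succ hj (by omega) hu).imp_right ?_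
      eq_or_notMem_of_adj := fun u hu =>
        initialCycles_succ node ℓ j ▸ h.eq_or_notMem_of_adj_root hj hu }
  · rintro ⟨j', hj', hi', -⟩
    obtain rfl : j = j' := Nat.succ_injective hj'
    omega
  · rintro ⟨j', hj', -, rfl⟩
    obtain rfl : j = j' := Nat.succ_injective hj'
    exact mem_initialCycles.2 ⟨j, le_rfl, ℓ, le_rfl, rfl⟩

variable {M : Type*}

theorem gatedPart_initialCycles (h : IsOpenChain m (ℓ + 1) node k) (C : V → Finset M) (hj : j < m) :
    GatedPart (chainAdj m (ℓ + 1) node) C (initialCycles node ℓ j) (node j 0)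
      (2 * (ℓ + 1) * (j + 1)) (4 * (ℓ + 1) * (j + 1) ^ 2) := by
  induction j with
  | zero =>
    have hpart := h.attachedCycle_zero.gatedPart (.singleton _ C (node 0 1))
    rw [h.singleton_union_image] at hpart
    exact hpart.mono (by omega) (by omega)
  | succ j ih =>
    have hk := h.2.2.1 j hj
    have hgate : node j 0 = node (j + 1) (k j - 1 + 1) :=
      (h.2.2.2.1 j hj).trans (by rw [Nat.sub_add_cancel hk.1])
    have hpart := (h.attachedCycle_succ hj).gatedPart (hgate ▸ ih (j.lt_succ_self.trans hj))
    rw [← initialCycles_succ] at hpart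
    exact hpart.mono (by nlinarith) (by nlinarith)

end IsOpenChain

end OpenChains

theorem open_chain_improvement_path_general {V M : Type} [Fintype V] {m n : ℕ}
    {node : ℕ → ℕ → V} {k : ℕ → ℕ} (h : IsOpenChain m n node k) (C : V → Finset M)
    {s : V → M} (hs : Valid C s) :
    ∃ L ≤ 4 * n * m ^ 2,
      ImpPath (chainAdj m n node) (fun _ _ => 1) (fun _ _ => 0) C s L := by
  obtain ⟨ℓ, rfl⟩ := Nat.exists_eq_succ_of_ne_zero (by have := h.2.1; omega : n ≠ 0)
  have hm : m - 1 + 1 = m := Nat.sub_add_cancel (one_le_two.trans h.1)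
  have hpart := h.gatedPart_initialCycles C (j := m - 1) (by omega)
  rw [h.initialCycles_eq_univ, hm] at hpart
  obtain ⟨s', hr, -, hst⟩ := hpart.stabilize s (by simp [StableOn])
  exact hr.exists_impPath hs fun hs' =>
    isNash_of_forall_stableAt hs' (fun v => hst v trivial) h.not_adj_self h.card_pred_le_two

/-- There is a constant `c` such that every coordination game without bonuses
on an unweighted open chain of `m` cycles, each cycle having `n` nodes,
admits, from every joint strategy, a finite improvement path of length at most
`c * n * m ^ 2` ending in a Nash equilibrium. -/
theorem open_chain_improvement_path :
    ∃ c : ℕ,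
      ∀ (V : Type) [Fintype V] (M : Type) [Fintype M],
      ∀ (m n : ℕ) (node : ℕ → ℕ → V) (k : ℕ → ℕ),
        IsOpenChain m n node k →
      ∀ (C : V → Finset M), (∀ i, (C i).Nonempty) →
      ∀ s : V → M, Valid C s →
        ∃ L, L ≤ c * n * m ^ 2 ∧
          ImpPath (chainAdj m n node) (fun _ _ => 1) (fun _ _ => 0) C s L :=
  ⟨4, fun _ _ _ _ _ _ _ _ h C _ _ hs => open_chain_improvement_path_general h C hs⟩

end CG
end
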